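/- Let f : ℝ^n → ℝ be analytic on an open neighborhood of the origin with f(0) = 0, and let ω be the initial form of f, a nonzero homogeneous polynomial of degree d, so that g = f − ω vanishes to order at least d+1 at the origin. Set Ω = {x ∈ ℝ^n : |x| = 1, ω(x) < 0}. Then there exists a₀ < 0 such that for every a ∈ (a₀, 0) there exists r₀ > 0 such that for every r ∈ (0, r₀], the three sets {x : |x| = r, f(x) ≤ a·r^d}, {x : |x| = r, ω(x) ≤ a·r^d}, and Ω are pairwise homotopy equivalent. -/

import Mathlib

open Metric Set Asymptotics

/-!
The critical values of a polynomial on the unit sphere are finite in number: at a generic point of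
an irreducible component of the critical locus the Lagrange condition `dω = l • x` and
`∑ x i dx i = 0` give `dω = 0` in the Kähler differentials of the function field, so `ω` is
algebraic over the ground field there, and hence locally constant. Thus `ω` has no critical value
in some interval `(a₀, 0)`.

By homogeneity, rescaling by `r⁻¹` turns the sets in question into sublevel sets on the unit sphere
of `ω` and of `F y = f (r y) / r ^ d`, and `F - ω` tends to `0` in the `C¹` sense as `r → 0`. A
short step of projected gradient descent for `ω` lowers `ω` by at least a constant times the
distance travelled, uniformly on a band of regular values around `a`. A small Lipschitz
perturbation `F` is therefore also lowered there, so that `{F ≤ a}` is stable under the step, while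
every point of `{ω < 0}` enters `{F ≤ a}` after finitely many steps. Iterating the step for a time
that depends continuously on the point gives the homotopy equivalence `{F ≤ a} ≃ {ω < 0}`.
-/

section CriticalValues

variable {k σ : Type*} [Field k]

theorem formallySmooth_of_charZero (F K : Type*) [Field F] [CharZero F] [Field K] [Algebra F K] :
    Algebra.FormallySmooth F K := by
  obtain ⟨s, hs⟩ := exists_isTranscendenceBasis F K
  have := hs.isAlgebraic_field
  exact .of_algebraicIndependent_of_isSeparable hs.1

theorem mapBaseChange_injective_of_formallySmooth (R A B : Type*) [CommRing R] [CommRing A]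
    [CommRing B] [Algebra R A] [Algebra A B] [Algebra R B] [IsScalarTower R A B]
    [Algebra.FormallySmooth A B] :
    Function.Injective (KaehlerDifferential.mapBaseChange R A B) := by
  refine (injective_iff_map_eq_zero _).2 fun x hx => ?_
  obtain ⟨y, rfl⟩ := (Algebra.H1Cotangent.exact_δ_mapBaseChange R A B x).1 hx
  rw [Subsingleton.elim y 0, map_zero]

open Polynomial in
theorem kaehlerDifferential_D_ne_zero_of_transcendental {K : Type*} [Field K] [Algebra k K]
    [CharZero k] {t : K} (ht : Transcendental k t) : KaehlerDifferential.D k K t ≠ 0 := by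
  algebraize [(aeval (R := k) t).toRingHom]
  have : IsScalarTower k k[X] K := .of_algHom (aeval t)
  have : FaithfulSMul k[X] K :=
    (faithfulSMul_iff_algebraMap_injective _ _).2 (transcendental_iff_injective.1 ht)
  let := FractionRing.liftAlgebra k[X] K
  have := FractionRing.isScalarTower_liftAlgebra k[X] K
  have : CharZero (FractionRing k[X]) :=
    charZero_of_injective_algebraMap (algebraMap k (FractionRing k[X])).injective
  have := formallySmooth_of_charZero (FractionRing k[X]) K
  have : Algebra.FormallySmooth k[X] (FractionRing k[X]) := .of_isLocalization (nonZeroDivisors _)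
  have : Algebra.FormallySmooth k[X] K := .comp k[X] (FractionRing k[X]) K
  intro hD
  have hzero : (1 : K) ⊗ₜ[k[X]] KaehlerDifferential.D k k[X] X = 0 := by
    apply mapBaseChange_injective_of_formallySmooth k k[X] K
    have : algebraMap k[X] K X = t := aeval_X t
    simpa [this] using hD
  have := congrArg (LinearMap.liftBaseChange K
    (Algebra.linearMap k[X] K ∘ₗ (KaehlerDifferential.polynomialEquiv k).toLinearMap)) hzero
  simp at this

theorem derivation_aeval_eq_sum_pderiv {R A M : Type*} [Fintype σ] [CommSemiring R]
    [CommSemiring A] [Algebra R A] [AddCommMonoid M] [Module A M] [Module R M]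
    (D : Derivation R A M) (x : σ → A) (P : MvPolynomial σ R) :
    D (MvPolynomial.aeval x P) = ∑ i, MvPolynomial.aeval x (MvPolynomial.pderiv i P) • D (x i) := by
  classical
  induction P using MvPolynomial.induction_on with
  | C a => simp
  | add p q hp hq => simp [hp, hq, add_smul, Finset.sum_add_distrib]
  | mul_X p j hp =>
    simp [hp, add_smul, Finset.sum_add_distrib, Finset.smul_sum, smul_smul,
      MvPolynomial.pderiv_X, Pi.single_apply, apply_ite (MvPolynomial.aeval x), ite_smul]

open MvPolynomial

/-- `P(x) = t` for some point `x` of the unit sphere `∑ i, x i ^ 2 = 1` satisfying the Lagrange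
condition `dP(x) = l • x`, that is, `t` is a critical value of `P` on the sphere. -/
def IsSphereCriticalValue [Fintype σ] (P : MvPolynomial σ k) (t : k) : Prop :=
  ∃ x : σ → k, ∑ i, x i ^ 2 = 1 ∧ (∃ l : k, ∀ i, eval x (pderiv i P) = l * x i) ∧ eval x P = t

theorem isAlgebraic_aeval_of_pderiv_eq_mul [Fintype σ] [CharZero k] {K : Type*} [Field K]
    [Algebra k K] (P : MvPolynomial σ k) {x : σ → K} (hx : ∑ i, x i ^ 2 = 1) {l : K}
    (hl : ∀ i, aeval x (pderiv i P) = l * x i) : IsAlgebraic k (aeval x P) := by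
  have : CharZero K := charZero_of_injective_algebraMap (algebraMap k K).injective
  have hxdx : ∑ i, x i • KaehlerDifferential.D k K (x i) = 0 := by
    have h := congrArg (KaehlerDifferential.D k K) hx
    simp only [map_sum, Derivation.leibniz_pow, Derivation.map_one_eq_zero, Nat.add_one_sub_one,
      pow_one, ← Finset.smul_sum, ← Nat.cast_smul_eq_nsmul K, Nat.cast_ofNat] at h
    exact (smul_eq_zero.1 h).resolve_left two_ne_zero
  have hD : KaehlerDifferential.D k K (aeval x P) = 0 := by
    simp only [derivation_aeval_eq_sum_pderiv, hl, mul_smul, ← Finset.smul_sum, hxdx, smul_zero]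
  by_contra hP
  exact kaehlerDifferential_D_ne_zero_of_transcendental hP hD

/-- The ideal of the critical points of `P` on the unit sphere. The Lagrange multiplier is
eliminated: pairing `dP(x) = l • x` with `x` gives `l = ∑ j, x j * ∂P/∂x j`. -/
noncomputable def sphereCriticalIdeal [Fintype σ] (P : MvPolynomial σ k) :
    Ideal (MvPolynomial σ k) :=
  Ideal.span (insert (∑ j, X j ^ 2 - 1)
    (Set.range fun i => pderiv i P - (∑ j, X j * pderiv j P) * X i))

theorem sphereCriticalIdeal_le_ker_iff [Fintype σ] {A : Type*} [CommRing A] [Algebra k A]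
    (P : MvPolynomial σ k) (x : σ → A) :
    sphereCriticalIdeal P ≤ RingHom.ker (aeval x : MvPolynomial σ k →ₐ[k] A) ↔
      ∑ i, x i ^ 2 = 1 ∧ ∃ l : A, ∀ i, aeval x (pderiv i P) = l * x i := by
  simp only [sphereCriticalIdeal, Ideal.span_le, Set.insert_subset_iff, Set.range_subset_iff,
    SetLike.mem_coe, RingHom.mem_ker, map_sub, map_mul, map_sum, map_pow, map_one, aeval_X,
    sub_eq_zero]
  refine and_congr_right fun hx => ⟨fun h => ⟨_, h⟩, ?_⟩
  rintro ⟨l, hl⟩ i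
  simp only [hl, mul_left_comm _ l, ← sq, ← Finset.mul_sum, hx, mul_one]

theorem exists_aeval_mem_of_sphereCriticalIdeal_le [Fintype σ] [CharZero k] (P : MvPolynomial σ k)
    {p : Ideal (MvPolynomial σ k)} [p.IsPrime] (hp : sphereCriticalIdeal P ≤ p) :
    ∃ Q : Polynomial k, Q ≠ 0 ∧ Polynomial.aeval P Q ∈ p := by
  let K := FractionRing (MvPolynomial σ k ⧸ p)
  let φ : MvPolynomial σ k →ₐ[k] K :=
    (IsScalarTower.toAlgHom k (MvPolynomial σ k ⧸ p) K).comp (Ideal.Quotient.mkₐ k p)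
  have hker : RingHom.ker φ = p := by
    ext q
    simp [φ, RingHom.mem_ker, Ideal.Quotient.eq_zero_iff_mem]
  have hφ : φ = aeval fun i => φ (X i) := by
    ext i
    simp
  obtain ⟨hx, l, hl⟩ := (sphereCriticalIdeal_le_ker_iff P fun i => φ (X i)).1 (by rwa [← hφ, hker])
  obtain ⟨Q, hQ, hQP⟩ := isAlgebraic_aeval_of_pderiv_eq_mul P hx hl
  refine ⟨Q, hQ, ?_⟩
  rw [← hker, RingHom.mem_ker, ← Polynomial.aeval_algHom_apply, hφ]
  exact hQP

theorem exists_aeval_mem_radical {R A : Type*} [CommRing R] [IsDomain R] [CommRing A]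
    [IsNoetherianRing A] [Algebra R A] {I : Ideal A} {a : A}
    (h : ∀ p ∈ I.minimalPrimes, ∃ Q : Polynomial R, Q ≠ 0 ∧ Polynomial.aeval a Q ∈ p) :
    ∃ Q : Polynomial R, Q ≠ 0 ∧ Polynomial.aeval a Q ∈ I.radical := by
  choose! q hq hqp using h
  have hfin := Ideal.finite_minimalPrimes_of_isNoetherianRing A I
  refine ⟨∏ p ∈ hfin.toFinset, q p,
    Finset.prod_ne_zero_iff.2 fun p hp => hq p (hfin.mem_toFinset.1 hp), ?_⟩
  rw [← Ideal.sInf_minimalPrimes, Ideal.mem_sInf]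
  intro p hp
  rw [map_prod]
  exact p.mem_of_dvd (Finset.dvd_prod_of_mem _ (hfin.mem_toFinset.2 hp)) (hqp p hp)

theorem finite_setOf_isSphereCriticalValue [Fintype σ] [CharZero k] (P : MvPolynomial σ k) :
    {t | IsSphereCriticalValue P t}.Finite := by
  obtain ⟨Q, hQ, hQP⟩ := exists_aeval_mem_radical fun p hp =>
    have := hp.1.1
    exists_aeval_mem_of_sphereCriticalIdeal_le P hp.1.2
  refine (Polynomial.finite_setOfPred_isRoot hQ).subset ?_
  rintro _ ⟨x, hx, hl, rfl⟩
  have hle := (sphereCriticalIdeal_le_ker_iff P x).2 ⟨hx, by simpa only [aeval_eq_eval] using! hl⟩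
  have hroot := (RingHom.ker_isPrime (aeval x : MvPolynomial σ k →ₐ[k] k)).radical_le_iff.2 hle hQP
  rw [RingHom.mem_ker, ← Polynomial.aeval_algHom_apply] at hroot
  simpa [Polynomial.coe_aeval_eq_eval, aeval_eq_eval] using! hroot

end CriticalValues

section IteratedHomotopy

open scoped ContinuousMap unitInterval

variable {Y : Type*} [TopologicalSpace Y]

theorem nonempty_homotopyEquiv_of_homotopy_mapsTo {A : Set Y} {h : C(Y, Y)}
    (H : ContinuousMap.Homotopy (.id Y) h) (hA : ∀ s, MapsTo (fun x => H (s, x)) A A)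
    (hh : ∀ x, h x ∈ A) : Nonempty (A ≃ₕ Y) := by
  let i : C(A, Y) := ⟨Subtype.val, continuous_subtype_val⟩
  let j : C(Y, A) := ⟨fun x => ⟨h x, hh x⟩, by fun_prop⟩
  let HA : ContinuousMap.Homotopy (.id A) (j.comp i) :=
    { toFun := fun p => ⟨H (p.1, p.2), hA p.1 p.2.2⟩
      map_zero_left := fun x => by simp
      map_one_left := fun x => by simp [i, j] }
  exact ⟨⟨i, j, ⟨HA.symm⟩, ⟨H.symm⟩⟩⟩

/-- The homotopy `H` from the identity to `h`, iterated so as to go from the identity at time `0` to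
`h^[m]` at time `m`: the `k`-th copy of `H` runs during the time interval `[k, k + 1]`. -/
noncomputable def iteratedHomotopy {h : C(Y, Y)} (H : ContinuousMap.Homotopy (.id Y) h) :
    ℕ → ℝ → Y → Y
  | 0, _, x => x
  | m + 1, t, x => H.extend (t - m) (iteratedHomotopy H m t x)

namespace iteratedHomotopy

variable {h : C(Y, Y)} (H : ContinuousMap.Homotopy (.id Y) h)

theorem continuous (m : ℕ) : Continuous fun p : ℝ × Y => iteratedHomotopy H m p.1 p.2 := by
  induction m with
  | zero => exact continuous_snd
  | succ m ih =>
    have hH : Continuous fun p : ℝ × Y => H.extend p.1 p.2 :=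
      H.continuous.comp (continuous_projIcc.prodMap continuous_id)
    exact hH.comp (((continuous_fst.sub continuous_const).prodMk ih))

theorem eq_of_le {m m' : ℕ} (hm : m ≤ m') {t : ℝ} (ht : t ≤ m) (x : Y) :
    iteratedHomotopy H m' t x = iteratedHomotopy H m t x := by
  induction m', hm using Nat.le_induction with
  | base => rfl
  | succ k hk ih =>
    have hk' : (m : ℝ) ≤ k := by exact_mod_cast hk
    rw [iteratedHomotopy, ih, H.extend_apply_of_le_zero (by linarith), ContinuousMap.id_apply]

theorem eq_iterate {m : ℕ} {t : ℝ} (ht : m ≤ t) (x : Y) :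
    iteratedHomotopy H m t x = h^[m] x := by
  induction m with
  | zero => rfl
  | succ m ih =>
    push_cast at ht
    rw [iteratedHomotopy, ih (by linarith), H.extend_apply_of_one_le (by linarith),
      Function.iterate_succ_apply']

theorem mem_of_le {A : Set Y} (hA : ∀ s, MapsTo (fun x => H (s, x)) A A) {k m : ℕ} (hkm : k ≤ m)
    {t : ℝ} {x : Y} (hx : iteratedHomotopy H k t x ∈ A) : iteratedHomotopy H m t x ∈ A := by
  induction m, hkm using Nat.le_induction with
  | base => exact hx
  | succ m _ ih => exact hA _ ih

theorem continuous_natCeil : Continuous fun p : ℝ × Y => iteratedHomotopy H ⌈p.1⌉₊ p.1 p.2 := by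
  refine continuous_iff_continuousAt.2 fun ⟨t, x⟩ =>
    (continuous H ⌈t + 1⌉₊).continuousAt.congr ?_
  filter_upwards [continuous_fst.continuousAt.eventually (gt_mem_nhds (lt_add_one t))] with p hp
  exact eq_of_le H (Nat.ceil_mono hp.le) (Nat.le_ceil _) _

end iteratedHomotopy

theorem nonempty_homotopyEquiv_of_iterate_mem_interior [NormalSpace Y] [ParacompactSpace Y]
    {A : Set Y} {h : C(Y, Y)} (H : ContinuousMap.Homotopy (.id Y) h)
    (hA : ∀ s, MapsTo (fun x => H (s, x)) A A) (hreach : ∀ x, ∃ k : ℕ, h^[k] x ∈ interior A) :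
    Nonempty (A ≃ₕ Y) := by
  let Φ : ℝ → Y → Y := fun t x => iteratedHomotopy H ⌈t⌉₊ t x
  have hΦ : Continuous fun p : ℝ × Y => Φ p.1 p.2 := iteratedHomotopy.continuous_natCeil H
  -- A partition of unity yields a continuous time by which every point has entered `A`.
  obtain ⟨τ, hτ⟩ := exists_continuous_forall_mem_convex_of_local_const
    (t := fun y : Y => {t : ℝ | ∀ s ≥ t, Φ s y ∈ A})
    (fun y => OrdConnected.convex ⟨fun _ ha _ _ _ hc s hs => ha s (hc.1.trans hs)⟩)
    (fun x => by
      obtain ⟨k, hk⟩ := hreach x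
      refine ⟨k, ?_⟩
      filter_upwards [(h.continuous.iterate k).continuousAt.eventually
        (mem_interior_iff_mem_nhds.1 hk)] with y hy s hs
      refine iteratedHomotopy.mem_of_le H hA (Nat.cast_le.1 (hs.le.trans (Nat.le_ceil s))) ?_
      rwa [iteratedHomotopy.eq_iterate H hs])
  refine nonempty_homotopyEquiv_of_homotopy_mapsTo (h := ⟨fun x => Φ (max (τ x) 0) x, by fun_prop⟩)
    { toFun := fun p => Φ (p.1 * max (τ p.2) 0) p.2
      map_zero_left := fun x => by simp [Φ, iteratedHomotopy]
      map_one_left := fun x => by simp }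
    (fun s x hx => iteratedHomotopy.mem_of_le H hA (Nat.zero_le _) hx)
    (fun x => hτ x _ (le_max_left _ _))

theorem nonempty_homotopyEquiv_of_subset_of_iterate_mem_interior {A B : Set Y} [NormalSpace B]
    [ParacompactSpace B] (hAB : A ⊆ B) {h : C(Y, Y)} (H : ContinuousMap.Homotopy (.id Y) h)
    (hA : ∀ s, MapsTo (fun x => H (s, x)) A A) (hB : ∀ s, MapsTo (fun x => H (s, x)) B B)
    (hreach : ∀ x ∈ B, ∃ k : ℕ, h^[k] x ∈ interior A) : Nonempty (A ≃ₕ B) := by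
  have hhB : MapsTo h B B := fun x hx => by simpa only [H.apply_one] using hB 1 hx
  let hRestrict : C(B, B) := ⟨hhB.restrict h B B, h.continuous.restrict hhB⟩
  let HRestrict : ContinuousMap.Homotopy (.id B) hRestrict :=
    { toFun := fun p => ⟨H (p.1, p.2), hB p.1 p.2.2⟩
      map_zero_left := fun x => by simp
      map_one_left := fun x => by ext; simp [hRestrict] }
  let e : ((↑) ⁻¹' A : Set B) ≃ₜ A :=
    Topology.IsEmbedding.subtypeVal.homeomorphOfSubsetRange (by rwa [Subtype.range_coe])
  refine (nonempty_homotopyEquiv_of_iterate_mem_interior (A := Subtype.val ⁻¹' A) HRestrict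
    (fun s _ hx => hA s hx) fun x => ?_).map e.symm.toHomotopyEquiv.trans
  obtain ⟨k, hk⟩ := hreach x x.2
  refine ⟨k, preimage_interior_subset_interior_preimage continuous_subtype_val ?_⟩
  have hiterate : (hRestrict^[k] x : Y) = h^[k] x :=
    Function.Semiconj.iterate_right (f := ((↑) : B → Y)) (fun _ => rfl) k x
  rwa [mem_preimage, hiterate]

end IteratedHomotopy

section Descent

open scoped ContinuousMap NNReal

theorem exists_iterate_lt_of_decreasing {S : Type*} [TopologicalSpace S] [CompactSpace S]
    {ω : S → ℝ} (hω : Continuous ω) {h : S → S} (hh : Continuous h) (hle : ∀ x, ω (h x) ≤ ω x)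
    {b c : ℝ} (hlt : ∀ x, ω x ∈ Ico c b → ω (h x) < ω x) {x : S} (hx : ω x < b) :
    ∃ k : ℕ, ω (h^[k] x) < c := by
  by_contra! hc
  have hanti : Antitone fun k => ω (h^[k] x) :=
    antitone_nat_of_succ_le fun k => by simpa only [Function.iterate_succ_apply'] using hle _
  have hK : IsCompact {y | ω y ∈ Icc c (ω x)} := (isClosed_Icc.preimage hω).isCompact
  obtain ⟨y, hy, hmin⟩ := hK.exists_isMinOn ⟨x, hc 0, le_rfl⟩
    (f := fun y => ω y - ω (h y)) (by fun_prop)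
  set δ := ω y - ω (h y)
  have hδ : 0 < δ := sub_pos.2 (hlt y ⟨hy.1, hy.2.trans_lt hx⟩)
  have hdrop (k : ℕ) : ω (h^[k] x) ≤ ω x - k * δ := by
    induction k with
    | zero => simp
    | succ k ih =>
      have hstep : δ ≤ ω (h^[k] x) - ω (h (h^[k] x)) := hmin ⟨hc k, hanti (Nat.zero_le k)⟩
      rw [Function.iterate_succ_apply']
      push_cast
      linarith
  obtain ⟨k, hk⟩ := exists_nat_gt ((ω x - c) / δ)
  rw [div_lt_iff₀ hδ] at hk
  linarith [hdrop k, hc k]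

theorem nonempty_homotopyEquiv_of_descent {S : Type*} [PseudoMetricSpace S] [CompactSpace S]
    {ω : S → ℝ} (hω : Continuous ω) {h : C(S, S)} (H : ContinuousMap.Homotopy (.id S) h)
    (hle : ∀ s x, ω (H (s, x)) ≤ ω x) {a b ε : ℝ} (hb : a + ε < b)
    (hlt : ∀ x, ω x ∈ Ico (a - ε) b → ω (h x) < ω x) {κ : ℝ≥0}
    (hκ : ∀ s x, ω x ∈ Icc (a - ε) (a + ε) → κ * dist (H (s, x)) x ≤ ω x - ω (H (s, x)))
    {F : S → ℝ} (hF : ∀ x, |F x - ω x| ≤ ε) (hFκ : LipschitzWith κ fun x => F x - ω x) :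
    Nonempty ({x | F x ≤ a} ≃ₕ {x | ω x < b}) := by
  have hle_h (x : S) : ω (h x) ≤ ω x := by simpa only [H.apply_one] using hle 1 x
  refine nonempty_homotopyEquiv_of_subset_of_iterate_mem_interior (fun x (hx : F x ≤ a) => ?_) H
    (fun s x (hx : F x ≤ a) => ?_) (fun s x hx => (hle s x).trans_lt hx) (fun x hx => ?_)
  · change ω x < b
    linarith [abs_le.1 (hF x)]
  · change F (H (s, x)) ≤ a
    rcases lt_or_ge (ω x) (a - ε) with hlow | hband
    · linarith [hle s x, abs_le.1 (hF (H (s, x)))]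
    · have hlip := (abs_le.1 (hFκ.dist_le_mul (H (s, x)) x)).2
      linarith [hκ s x ⟨hband, by linarith [abs_le.1 (hF x)]⟩]
  · obtain ⟨k, hk⟩ := exists_iterate_lt_of_decreasing hω h.continuous hle_h hlt hx
    have hsub : {y | ω y < a - ε} ⊆ {y | F y ≤ a} := fun y (hy : ω y < a - ε) =>
      show F y ≤ a by linarith [abs_le.1 (hF y)]
    exact ⟨k, interior_maximal hsub (isOpen_lt hω continuous_const) hk⟩

end Descent

section SphereGradientDescent

open NormedSpace
open scoped ContinuousMap Gradient InnerProductSpace NNReal unitInterval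

theorem norm_sub_sub_fderiv_le_of_lipschitzOnWith {E F : Type*} [NormedAddCommGroup E]
    [NormedSpace ℝ E] [NormedAddCommGroup F] [NormedSpace ℝ F] {f : E → F} {s : Set E} {L : ℝ≥0}
    (hf : ∀ x ∈ s, DifferentiableAt ℝ f x) (hL : LipschitzOnWith L (fderiv ℝ f) s)
    (hs : Convex ℝ s) {x y : E} (hx : x ∈ s) (hy : y ∈ s) :
    ‖f y - f x - fderiv ℝ f x (y - x)‖ ≤ L * ‖y - x‖ ^ 2 := by
  have hseg : segment ℝ x y ⊆ s := hs.segment_subset hx hy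
  rw [sq, ← mul_assoc]
  refine (convex_segment x y).norm_image_sub_le_of_norm_fderiv_le' (fun z hz => hf z (hseg hz))
    (fun z hz => ?_) (left_mem_segment ℝ x y) (right_mem_segment ℝ x y)
  exact (hL.norm_sub_le (hseg hz) hx).trans (by gcongr; exact norm_sub_le_of_mem_segment hz)

variable {E : Type*} [NormedAddCommGroup E] [InnerProductSpace ℝ E]

theorem norm_sub_sq_of_inner_eq_zero {x w : E} (hx : ‖x‖ = 1) (hw : ⟪x, w⟫_ℝ = 0) :
    ‖x - w‖ ^ 2 = 1 + ‖w‖ ^ 2 := by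
  rw [norm_sub_sq_real, hx, hw]
  ring

theorem one_le_norm_sub_of_inner_eq_zero {x w : E} (hx : ‖x‖ = 1) (hw : ⟪x, w⟫_ℝ = 0) :
    1 ≤ ‖x - w‖ := by
  rw [← one_le_sq_iff₀ (norm_nonneg _), norm_sub_sq_of_inner_eq_zero hx hw]
  exact le_add_of_nonneg_right (sq_nonneg _)

theorem norm_normalize_sub_self {z : E} (hz : 1 ≤ ‖z‖) : ‖normalize z - z‖ = ‖z‖ - 1 := by
  have hinv : ‖z‖⁻¹ ≤ 1 := inv_le_one_of_one_le₀ hz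
  calc ‖normalize z - z‖ = ‖(‖z‖⁻¹ - 1) • z‖ := by rw [NormedSpace.normalize, sub_smul, one_smul]
    _ = (1 - ‖z‖⁻¹) * ‖z‖ := by
      rw [norm_smul, Real.norm_of_nonpos (sub_nonpos.2 hinv), neg_sub]
    _ = ‖z‖ - 1 := by
      field_simp

theorem norm_normalize_sub_sub_le {x w : E} (hx : ‖x‖ = 1) (hw : ⟪x, w⟫_ℝ = 0) :
    ‖normalize (x - w) - (x - w)‖ ≤ ‖w‖ ^ 2 / 2 := by
  rw [norm_normalize_sub_self (one_le_norm_sub_of_inner_eq_zero hx hw)]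
  nlinarith [norm_sub_sq_of_inner_eq_zero hx hw, sq_nonneg (‖x - w‖ - 1)]

theorem norm_normalize_sub_left_le {x w : E} (hx : ‖x‖ = 1) (hw : ⟪x, w⟫_ℝ = 0) :
    ‖normalize (x - w) - x‖ ≤ 2 * ‖w‖ :=
  calc ‖normalize (x - w) - x‖ ≤ ‖normalize (x - w) - (x - w)‖ + ‖x - w - x‖ :=
      norm_sub_le_norm_sub_add_norm_sub _ _ _
    _ = ‖x - w‖ - 1 + ‖w‖ := by
      rw [norm_normalize_sub_self (one_le_norm_sub_of_inner_eq_zero hx hw), sub_sub_cancel_left,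
        norm_neg]
    _ ≤ 2 * ‖w‖ := by linarith [norm_sub_le x w]

/-- The component of the gradient of `ω` at `x` orthogonal to `x`. For `x` on the unit sphere this
is the gradient at `x` of the restriction of `ω` to the sphere. -/
noncomputable def tangentialGradient [CompleteSpace E] (ω : E → ℝ) (x : E) : E :=
  ∇ ω x - ⟪x, ∇ ω x⟫_ℝ • x

section CompleteSpace

variable [CompleteSpace E]

theorem inner_tangentialGradient_right (ω : E → ℝ) {x : E} (hx : ‖x‖ = 1) :
    ⟪x, tangentialGradient ω x⟫_ℝ = 0 := by
  rw [tangentialGradient, inner_sub_right, real_inner_smul_right, real_inner_self_eq_norm_sq, hx]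
  ring

theorem fderiv_apply_tangentialGradient (ω : E → ℝ) {x : E} (hx : ‖x‖ = 1) :
    fderiv ℝ ω x (tangentialGradient ω x) = ‖tangentialGradient ω x‖ ^ 2 := by
  have hgrad : ∇ ω x = tangentialGradient ω x + ⟪x, ∇ ω x⟫_ℝ • x := (sub_add_cancel _ _).symm
  rw [← inner_gradient_left, hgrad, inner_add_left, real_inner_smul_left,
    inner_tangentialGradient_right ω hx, mul_zero, add_zero, real_inner_self_eq_norm_sq]

theorem continuous_tangentialGradient {ω : E → ℝ} (hω : ContDiff ℝ 1 ω) :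
    Continuous (tangentialGradient ω) := by
  have hgrad : Continuous (∇ ω) :=
    (InnerProductSpace.toDual ℝ E).symm.continuous.comp (hω.continuous_fderiv one_ne_zero)
  unfold tangentialGradient
  fun_prop

/-- The step of size `s` of projected gradient descent on the unit sphere: move from `x` against
the tangential gradient of `ω`, then project radially back to the sphere. -/
noncomputable def gradientStep (ω : E → ℝ) (s : ℝ) (x : E) : E :=
  normalize (x - s • tangentialGradient ω x)

theorem inner_smul_tangentialGradient_right (ω : E → ℝ) (s : ℝ) {x : E} (hx : ‖x‖ = 1) :
    ⟪x, s • tangentialGradient ω x⟫_ℝ = 0 := by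
  rw [real_inner_smul_right, inner_tangentialGradient_right ω hx, mul_zero]

theorem sub_smul_tangentialGradient_ne_zero (ω : E → ℝ) (s : ℝ) {x : E} (hx : ‖x‖ = 1) :
    x - s • tangentialGradient ω x ≠ 0 :=
  norm_pos_iff.1 <| one_pos.trans_le <|
    one_le_norm_sub_of_inner_eq_zero hx (inner_smul_tangentialGradient_right ω s hx)

theorem norm_gradientStep (ω : E → ℝ) (s : ℝ) {x : E} (hx : ‖x‖ = 1) :
    ‖gradientStep ω s x‖ = 1 :=
  norm_normalize_eq_one_iff.2 (sub_smul_tangentialGradient_ne_zero ω s hx)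

theorem gradientStep_zero (ω : E → ℝ) {x : E} (hx : ‖x‖ = 1) : gradientStep ω 0 x = x := by
  rw [gradientStep, zero_smul, sub_zero, normalize_eq_self_of_norm_eq_one hx]

theorem norm_gradientStep_sub_le (ω : E → ℝ) {s : ℝ} (hs : 0 ≤ s) {x : E} (hx : ‖x‖ = 1) :
    ‖gradientStep ω s x - x‖ ≤ 2 * (s * ‖tangentialGradient ω x‖) :=
  (norm_normalize_sub_left_le hx (inner_smul_tangentialGradient_right ω s hx)).trans_eq <| by
    rw [norm_smul, Real.norm_of_nonneg hs]

theorem continuousOn_gradientStep {ω : E → ℝ} (hω : ContDiff ℝ 1 ω) :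
    ContinuousOn (fun p : ℝ × E => gradientStep ω p.1 p.2) {p | ‖p.2‖ = 1} := by
  have hgrad : Continuous fun p : ℝ × E => p.2 - p.1 • tangentialGradient ω p.2 :=
    continuous_snd.sub <|
      continuous_fst.smul ((continuous_tangentialGradient hω).comp continuous_snd)
  exact (hgrad.norm.continuousOn.inv₀ fun p hp =>
    norm_ne_zero_iff.2 (sub_smul_tangentialGradient_ne_zero ω p.1 hp)).smul hgrad.continuousOn

end CompleteSpace

variable [ProperSpace E]

theorem exists_gradientStep_le {ω : E → ℝ} (hω : ContDiff ℝ 2 ω) :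
    ∃ η > 0, ∀ x, ‖x‖ = 1 → ∀ s ∈ Icc 0 η,
      ω (gradientStep ω s x) ≤ ω x - s / 2 * ‖tangentialGradient ω x‖ ^ 2 := by
  have hfderiv : ContDiff ℝ 1 (fderiv ℝ ω) := hω.fderiv_right (by norm_num)
  obtain ⟨M, hM⟩ := (isCompact_closedBall (0 : E) 1).exists_bound_of_continuousOn
    hfderiv.continuous.continuousOn
  obtain ⟨L, hL⟩ := hfderiv.contDiffOn.exists_lipschitzOnWith one_ne_zero
    (convex_closedBall (0 : E) 1) (isCompact_closedBall _ _)
  have hM0 : 0 ≤ M := (norm_nonneg _).trans (hM 0 (by simp))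
  refine ⟨1 / (8 * L + M + 1), by positivity, fun x hx s hs => ?_⟩
  have hsL : s * (8 * L + M + 1) ≤ 1 := (le_div_iff₀ (by positivity)).1 hs.2
  set v := tangentialGradient ω x
  set y := gradientStep ω s x
  have hmem {z : E} (hz : ‖z‖ = 1) : z ∈ closedBall (0 : E) 1 := mem_closedBall_zero_iff.2 hz.le
  have htaylor : ω y - ω x - fderiv ℝ ω x (y - x) ≤ L * (4 * s ^ 2 * ‖v‖ ^ 2) :=
    calc ω y - ω x - fderiv ℝ ω x (y - x) ≤ L * ‖y - x‖ ^ 2 :=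
        (le_abs_self _).trans <| norm_sub_sub_fderiv_le_of_lipschitzOnWith
          (fun _ _ => hω.differentiable two_ne_zero _) hL (convex_closedBall _ _) (hmem hx)
          (hmem (norm_gradientStep ω s hx))
      _ ≤ L * (2 * (s * ‖v‖)) ^ 2 := by gcongr; exact norm_gradientStep_sub_le ω hs.1 hx
      _ = L * (4 * s ^ 2 * ‖v‖ ^ 2) := by ring
  have hnormalize : fderiv ℝ ω x (y - (x - s • v)) ≤ M * (s ^ 2 * ‖v‖ ^ 2 / 2) :=
    calc fderiv ℝ ω x (y - (x - s • v)) ≤ ‖fderiv ℝ ω x‖ * ‖y - (x - s • v)‖ :=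
        (le_abs_self _).trans ((fderiv ℝ ω x).le_opNorm _)
      _ ≤ M * (‖s • v‖ ^ 2 / 2) := by
        gcongr
        · exact hM x (hmem hx)
        · exact norm_normalize_sub_sub_le hx (inner_smul_tangentialGradient_right ω s hx)
      _ = M * (s ^ 2 * ‖v‖ ^ 2 / 2) := by rw [norm_smul, mul_pow, Real.norm_eq_abs, sq_abs]
  have hsplit : fderiv ℝ ω x (y - x) = fderiv ℝ ω x (y - (x - s • v)) - s * ‖v‖ ^ 2 := by
    rw [← fderiv_apply_tangentialGradient ω hx, ← smul_eq_mul, ← map_smul, ← map_sub]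
    congr 1
    abel
  nlinarith [mul_nonneg (mul_nonneg hs.1 (sub_nonneg.2 hsL)) (sq_nonneg ‖v‖),
    mul_nonneg (sq_nonneg s) (sq_nonneg ‖v‖)]

theorem exists_descent_homotopy_sphere {ω : E → ℝ} (hω : ContDiff ℝ 2 ω) :
    ∃ (h : C(sphere (0 : E) 1, sphere (0 : E) 1)) (H : ContinuousMap.Homotopy (.id _) h),
      (∀ s (x : sphere (0 : E) 1),
        ‖tangentialGradient ω x‖ * dist (H (s, x)) x ≤ 4 * (ω x - ω (H (s, x)))) ∧
      (∀ s (x : sphere (0 : E) 1), ω (H (s, x)) ≤ ω x) ∧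
      ∀ x : sphere (0 : E) 1, tangentialGradient ω x ≠ 0 → ω (h x) < ω x := by
  obtain ⟨η, hη, hdesc⟩ := exists_gradientStep_le hω
  have hstep (s : ℝ) (x : sphere (0 : E) 1) : gradientStep ω s x ∈ sphere (0 : E) 1 :=
    mem_sphere_zero_iff_norm.2 (norm_gradientStep ω s (norm_eq_of_mem_sphere x))
  have hcont : Continuous fun p : ℝ × sphere (0 : E) 1 => gradientStep ω p.1 p.2 :=
    (continuousOn_gradientStep (hω.of_le one_le_two)).comp_continuous
      (continuous_fst.prodMk (continuous_subtype_val.comp continuous_snd))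
      fun p => norm_eq_of_mem_sphere p.2
  have hmul (s : I) : s * η ∈ Icc 0 η :=
    ⟨mul_nonneg s.2.1 hη.le, mul_le_of_le_one_left hη.le s.2.2⟩
  refine ⟨⟨fun x => ⟨gradientStep ω η x, hstep η x⟩,
      (hcont.comp (continuous_const.prodMk continuous_id)).subtype_mk _⟩,
    { toFun := fun p => ⟨gradientStep ω (p.1 * η) p.2, hstep _ p.2⟩
      continuous_toFun := (hcont.comp (((continuous_subtype_val.comp continuous_fst).mul
        continuous_const).prodMk continuous_snd)).subtype_mk _
      map_zero_left := fun x => by simp [gradientStep_zero]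
      map_one_left := fun x => by simp }, fun s x => ?_, fun s x => ?_, fun x hx => ?_⟩
  · have hs := hmul s
    have hx := norm_eq_of_mem_sphere x
    rw [Subtype.dist_eq, dist_eq_norm]
    change ‖tangentialGradient ω x‖ * ‖gradientStep ω (s * η) x - x‖ ≤
      4 * (ω x - ω (gradientStep ω (s * η) x))
    nlinarith [hdesc x hx _ hs, mul_le_mul_of_nonneg_left (norm_gradientStep_sub_le ω hs.1 hx)
      (norm_nonneg (tangentialGradient ω x))]
  · refine (hdesc x (norm_eq_of_mem_sphere x) _ (hmul s)).trans (sub_le_self _ ?_)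
    have := (hmul s).1
    positivity
  · refine (hdesc x (norm_eq_of_mem_sphere x) η ⟨hη.le, le_rfl⟩).trans_lt (sub_lt_self _ ?_)
    positivity

theorem exists_forall_nonempty_homotopyEquiv_sublevel_sphere {ω : E → ℝ} (hω : ContDiff ℝ 2 ω)
    {a₀ a b : ℝ} (ha : a ∈ Ioo a₀ b)
    (hreg : ∀ x, ‖x‖ = 1 → ω x ∈ Ioo a₀ b → tangentialGradient ω x ≠ 0) :
    ∃ ε > (0 : ℝ≥0), ∀ F : sphere (0 : E) 1 → ℝ, (∀ x, |F x - ω x| ≤ ε) →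
      (LipschitzWith ε fun x => F x - ω x) →
        Nonempty ({x | F x ≤ a} ≃ₕ {x : sphere (0 : E) 1 | ω x < b}) := by
  let δ : ℝ := min (a - a₀) (b - a) / 2
  have hδ : 0 < δ := half_pos (lt_min (sub_pos.2 ha.1) (sub_pos.2 ha.2))
  have hδ₀ : a₀ < a - δ := by linarith [min_le_left (a - a₀) (b - a), show δ = _ / 2 from rfl]
  have hδb : a + δ < b := by linarith [min_le_right (a - a₀) (b - a), show δ = _ / 2 from rfl]
  have hωS : Continuous fun x : sphere (0 : E) 1 => ω x :=
    hω.continuous.comp continuous_subtype_val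
  have hreg' (x : sphere (0 : E) 1) := hreg x (norm_eq_of_mem_sphere x)
  obtain ⟨m, hm, hmle⟩ := (isClosed_Icc.preimage hωS).isCompact.exists_forall_le'
    (((continuous_tangentialGradient (hω.of_le one_le_two)).comp
      continuous_subtype_val).norm.continuousOn)
    (fun x (hx : ω x ∈ Icc (a - δ) (a + δ)) =>
      norm_pos_iff.2 (hreg' x ⟨hδ₀.trans_le hx.1, hx.2.trans_lt hδb⟩))
  obtain ⟨h, H, hdist, hle, hlt⟩ := exists_descent_homotopy_sphere hω
  let ε : ℝ≥0 := ⟨min δ (m / 4), by positivity⟩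
  have hεδ : (ε : ℝ) ≤ δ := min_le_left _ _
  have hεm : (ε : ℝ) ≤ m / 4 := min_le_right _ _
  refine ⟨ε, lt_min hδ (by positivity), fun F hF hFε => ?_⟩
  refine nonempty_homotopyEquiv_of_descent hωS H hle hδb
    (fun x hx => hlt x (hreg' x ⟨hδ₀.trans_le hx.1, hx.2⟩)) (fun s x hx => ?_)
    (fun x => (hF x).trans hεδ) hFε
  calc ε * dist (H (s, x)) x ≤ ‖tangentialGradient ω x‖ / 4 * dist (H (s, x)) x := by
        gcongr
        exact hεm.trans (by gcongr; exact hmle x hx)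
    _ ≤ ω x - ω (H (s, x)) := by linarith [hdist s x]

end SphereGradientDescent

section Rescaling

open Filter
open scoped NNReal Topology

variable {E : Type*} [NormedAddCommGroup E] [NormedSpace ℝ E]

/-- Rescaling by `r⁻¹` identifies a subset of the sphere of radius `r` with a subset of the unit
sphere. -/
noncomputable def sphereRescaleHomeomorph {r : ℝ} (hr : 0 < r) (p : E → Prop) :
    {x : E | ‖x‖ = r ∧ p x} ≃ₜ {y : sphere (0 : E) 1 | p (r • (y : E))} where
  toFun x := ⟨⟨r⁻¹ • (x : E), by simp [norm_smul, x.2.1, abs_of_pos hr, hr.ne']⟩, by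
    simpa [smul_inv_smul₀ hr.ne'] using x.2.2⟩
  invFun y := ⟨r • (y : E), by simp [norm_smul, abs_of_pos hr], y.2⟩
  left_inv x := by simp [smul_inv_smul₀ hr.ne']
  right_inv y := by simp [inv_smul_smul₀ hr.ne']

theorem exists_forall_lipschitzOnWith_rescale {F : Type*} [NormedAddCommGroup F] [NormedSpace ℝ F]
    {g : E → F} (hg : ∀ᶠ x in 𝓝 0, DifferentiableAt ℝ g x) {d : ℕ}
    (hg' : fderiv ℝ g =O[𝓝 0] fun x => ‖x‖ ^ d) {ε : ℝ≥0} (hε : 0 < ε) :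
    ∃ r₀ > (0 : ℝ), ∀ r ∈ Ioc 0 r₀,
      LipschitzOnWith ε (fun x => (r ^ d)⁻¹ • g (r • x)) (closedBall 0 1) := by
  obtain ⟨C, hC, hbound⟩ := hg'.exists_pos
  obtain ⟨δ, hδ, hball⟩ := Metric.eventually_nhds_iff_ball.1 (hg.and hbound.bound)
  refine ⟨min (δ / 2) (ε / C), by positivity, fun r hr => ?_⟩
  have hr0 : 0 < r := hr.1
  have hrδ : r < δ := (hr.2.trans (min_le_left _ _)).trans_lt (half_lt_self hδ)
  have hCr : C * r ≤ ε := (le_div_iff₀' hC).1 (hr.2.trans (min_le_right _ _))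
  have hsub : closedBall (0 : E) r ⊆ ball 0 δ := closedBall_subset_ball hrδ
  have hfderiv {z : E} (hz : z ∈ closedBall (0 : E) r) : ‖fderiv ℝ g z‖ ≤ C * r ^ d :=
    calc ‖fderiv ℝ g z‖ ≤ C * ‖‖z‖ ^ d‖ := (hball z (hsub hz)).2
      _ ≤ C * r ^ d := by
        rw [norm_pow, norm_norm]
        gcongr
        exact mem_closedBall_zero_iff.1 hz
  have hmem {x : E} (hx : x ∈ closedBall (0 : E) 1) : r • x ∈ closedBall (0 : E) r := by
    rw [mem_closedBall_zero_iff] at hx ⊢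
    rw [norm_smul, Real.norm_of_nonneg hr0.le]
    exact mul_le_of_le_one_right hr0.le hx
  refine LipschitzOnWith.of_dist_le_mul fun x hx y hy => ?_
  have hmvt : ‖g (r • x) - g (r • y)‖ ≤ C * r ^ d * ‖r • x - r • y‖ :=
    (convex_closedBall 0 r).norm_image_sub_le_of_norm_fderiv_le
      (fun z hz => (hball z (hsub hz)).1) (fun z hz => hfderiv hz) (hmem hy) (hmem hx)
  calc dist ((r ^ d)⁻¹ • g (r • x)) ((r ^ d)⁻¹ • g (r • y))
      = (r ^ d)⁻¹ * ‖g (r • x) - g (r • y)‖ := by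
        rw [dist_smul₀, dist_eq_norm, Real.norm_of_nonneg (by positivity)]
    _ ≤ (r ^ d)⁻¹ * (C * r ^ d * ‖r • x - r • y‖) := by gcongr
    _ = C * r * dist x y := by
      rw [← smul_sub, norm_smul, Real.norm_of_nonneg hr0.le, dist_eq_norm]
      field_simp
    _ ≤ ε * dist x y := by gcongr

end Rescaling

section PolynomialCalculus

open MvPolynomial
open scoped Gradient InnerProductSpace

theorem eval_smul_of_isHomogeneous {R σ : Type*} [CommSemiring R] {P : MvPolynomial σ R} {d : ℕ}
    (hP : P.IsHomogeneous d) (r : R) (x : σ → R) : eval (r • x) P = r ^ d * eval x P := by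
  rw [eval_eq, eval_eq, Finset.mul_sum]
  refine Finset.sum_congr rfl fun m hm => ?_
  have hdeg : ∑ i ∈ m.support, m i = d := by
    rw [← hP (mem_support_iff.1 hm), Finsupp.weight_apply]
    simp [Finsupp.sum]
  simp only [Pi.smul_apply, smul_eq_mul, mul_pow, Finset.prod_mul_distrib,
    Finset.prod_pow_eq_pow_sum, hdeg]
  ring

variable {ι : Type*} [Fintype ι]

theorem hasFDerivAt_mvPolynomial_eval {𝕜 E : Type*} [NontriviallyNormedField 𝕜]
    [NormedAddCommGroup E] [NormedSpace 𝕜 E] {u : E → ι → 𝕜} {u' : ι → E →L[𝕜] 𝕜} {x : E}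
    (hu : ∀ i, HasFDerivAt (fun y => u y i) (u' i) x) (P : MvPolynomial ι 𝕜) :
    HasFDerivAt (fun y => eval (u y) P) (∑ i, eval (u x) (pderiv i P) • u' i) x := by
  classical
  induction P using MvPolynomial.induction_on with
  | C a =>
    simp only [eval_C]
    refine (hasFDerivAt_const a x).congr_fderiv ?_
    ext w
    simp
  | add p q hp hq =>
    simp only [map_add]
    refine (hp.fun_add hq).congr_fderiv ?_
    ext w
    simp [add_mul, Finset.sum_add_distrib]
  | mul_X p j hp =>
    simp only [map_mul, eval_X]
    refine (hp.fun_mul (hu j)).congr_fderiv ?_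
    ext w
    simp [add_mul, Finset.sum_add_distrib, Finset.mul_sum, mul_assoc, pderiv_X, Pi.single_apply,
      apply_ite (eval (u x)), ite_mul]

theorem gradient_eval_apply (P : MvPolynomial ι ℝ) (x : EuclideanSpace ℝ ι) (i : ι) :
    (∇ (fun y : EuclideanSpace ℝ ι => eval (fun j => y j) P) x) i =
      eval (fun j => x j) (pderiv i P) := by
  classical
  have hderiv := hasFDerivAt_mvPolynomial_eval (u := fun (y : EuclideanSpace ℝ ι) j => y j)
    (fun j => (EuclideanSpace.proj j : EuclideanSpace ℝ ι →L[ℝ] ℝ).hasFDerivAt (x := x)) P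
  have hinner := inner_gradient_left (𝕜 := ℝ) (x := x) (y := EuclideanSpace.single i (1 : ℝ))
    (f := fun y : EuclideanSpace ℝ ι => eval (fun j => y j) P)
  rw [EuclideanSpace.inner_single_right, hderiv.fderiv] at hinner
  simpa [Pi.single_apply] using hinner

theorem isSphereCriticalValue_of_tangentialGradient_eq_zero (P : MvPolynomial ι ℝ)
    {x : EuclideanSpace ℝ ι} (hx : ‖x‖ = 1)
    (hgrad : tangentialGradient (fun y : EuclideanSpace ℝ ι => eval (fun j => y j) P) x = 0) :
    IsSphereCriticalValue P (eval (fun i => x i) P) := by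
  refine ⟨fun i => x i, ?_, ⟨⟪x, ∇ (fun y : EuclideanSpace ℝ ι => eval (fun j => y j) P) x⟫_ℝ,
    fun i => ?_⟩, rfl⟩
  · rw [← EuclideanSpace.real_norm_sq_eq, hx, one_pow]
  · rw [← gradient_eval_apply]
    exact congrArg (fun v : EuclideanSpace ℝ ι => v i) (sub_eq_zero.1 hgrad)

end PolynomialCalculus

section VanishingOrder

open scoped Topology

variable {𝕜 E F : Type*} [NontriviallyNormedField 𝕜] [NormedAddCommGroup E] [NormedSpace 𝕜 E]
  [NormedAddCommGroup F] [NormedSpace 𝕜 F] {f : E → F} {x : E}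

theorem apply_eq_zero_of_isBigO_norm_pow {p : FormalMultilinearSeries 𝕜 E F}
    (hp : HasFPowerSeriesAt f p x) {n : ℕ} (hf : (fun y => f (x + y)) =O[𝓝 0] fun y => ‖y‖ ^ n)
    {k : ℕ} (hk : k < n) (y : E) : (p k fun _ => y) = 0 := by
  induction k using Nat.strong_induction_on generalizing y with
  | _ k ih =>
    have hpartialSum (z : E) : p.partialSum (k + 1) z = p k fun _ => z :=
      Finset.sum_eq_single_of_mem k (Finset.self_mem_range_succ k) fun j hj hjk =>
        have hjk' : j < k := (Finset.mem_range_succ_iff.1 hj).lt_of_ne hjk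
        ih j hjk' (hjk'.trans hk) z
    have htaylor := hp.isBigO_sub_partialSum_pow (k + 1)
    have hpow : (fun z : E => ‖z‖ ^ n) =O[𝓝 0] fun z => ‖z‖ ^ (k + 1) :=
      (Nat.eq_or_lt_of_le hk).elim (fun h => h ▸ isBigO_refl _ _) fun h =>
        (isLittleO_norm_pow_norm_pow h).isBigO
    have hpk : (fun z => p k fun _ => z) =O[𝓝 0] fun z => ‖z‖ ^ (k + 1) := by
      simpa [hpartialSum] using (hf.trans hpow).sub htaylor
    exact hpk.continuousMultilinearMap_apply_eq_zero y

theorem isBigO_fderiv_of_isBigO_norm_pow_succ [CompleteSpace F] (hf : AnalyticAt 𝕜 f x) {n : ℕ}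
    (hO : (fun y => f (x + y)) =O[𝓝 0] fun y => ‖y‖ ^ (n + 1)) :
    (fun y => fderiv 𝕜 f (x + y)) =O[𝓝 0] fun y => ‖y‖ ^ n := by
  obtain ⟨p, r, hp⟩ := hf
  -- The low-order terms of `p` need not vanish as multilinear maps, so they are cut off.
  let q : FormalMultilinearSeries 𝕜 E F := fun k => if k ≤ n then 0 else p k
  have hq : HasFPowerSeriesOnBall f q x r := by
    refine ⟨hp.r_le.trans (FormalMultilinearSeries.radius_le_of_le fun {k} => ?_), hp.r_pos,
      fun {y} hy => ?_⟩
    · by_cases hk : k ≤ n <;> simp [q, hk]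
    · convert hp.hasSum hy using 2 with k
      by_cases hk : k ≤ n
      · simp [q, hk,
          apply_eq_zero_of_isBigO_norm_pow hp.hasFPowerSeriesAt hO (Nat.lt_succ_of_le hk)]
      · simp [q, hk]
  have hpartialSum (y : E) : q.derivSeries.partialSum n y = 0 :=
    Finset.sum_eq_zero fun k hk => by
      rw [q.derivSeries_eq_zero (if_pos (Finset.mem_range.1 hk)), zero_apply]
  simpa only [hpartialSum, sub_zero] using hq.fderiv.hasFPowerSeriesAt.isBigO_sub_partialSum_pow n

end VanishingOrder

section RegularValues

open Filter MvPolynomial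
open scoped ContinuousMap NNReal Topology

theorem exists_lt_disjoint_Ioo_of_finite {α : Type*} [LinearOrder α] [TopologicalSpace α]
    [OrderTopology α] [NoMinOrder α] {s : Set α} (hs : s.Finite) (b : α) :
    ∃ a < b, Disjoint (Ioo a b) s := by
  have hcompl : (s \ {b})ᶜ ∈ 𝓝[<] b :=
    mem_nhdsWithin_of_mem_nhds (hs.sdiff.isClosed.isOpen_compl.mem_nhds (by simp))
  obtain ⟨a, hab, hsub⟩ := mem_nhdsLT_iff_exists_Ioo_subset.1 hcompl
  exact ⟨a, hab, disjoint_left.2 fun t ht hts => hsub ht ⟨hts, ht.2.ne⟩⟩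

theorem exists_forall_nonempty_homotopyEquiv_of_isBigO_fderiv_sub {E : Type*}
    [NormedAddCommGroup E] [InnerProductSpace ℝ E] [ProperSpace E] {f ω : E → ℝ}
    (hω : ContDiff ℝ 2 ω) {d : ℕ} (hωd : ∀ r > (0 : ℝ), ∀ x, ω (r • x) = r ^ d * ω x)
    {a₀ a b : ℝ} (ha : a ∈ Ioo a₀ b)
    (hreg : ∀ x, ‖x‖ = 1 → ω x ∈ Ioo a₀ b → tangentialGradient ω x ≠ 0)
    (hf : ∀ᶠ x in 𝓝 0, DifferentiableAt ℝ f x) (hf0 : f 0 = ω 0)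
    (hg : fderiv ℝ (fun x => f x - ω x) =O[𝓝 0] fun x => ‖x‖ ^ d) :
    ∃ r₀ > (0 : ℝ), ∀ r ∈ Ioc 0 r₀,
      Nonempty ({x | ‖x‖ = r ∧ f x ≤ a * r ^ d} ≃ₕ {x | ‖x‖ = 1 ∧ ω x < b}) := by
  obtain ⟨ε, hε, hequiv⟩ := exists_forall_nonempty_homotopyEquiv_sublevel_sphere hω ha hreg
  obtain ⟨r₀, hr₀, hlip⟩ := exists_forall_lipschitzOnWith_rescale
    (hf.mono fun x hx => hx.fun_sub (hω.differentiable two_ne_zero x)) hg hε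
  refine ⟨r₀, hr₀, fun r hr => ?_⟩
  have hrd : 0 < r ^ d := pow_pos hr.1 d
  have hrescale (x : E) : f (r • x) / r ^ d - ω x = (r ^ d)⁻¹ • (f (r • x) - ω (r • x)) := by
    rw [hωd r hr.1, smul_eq_mul]
    field_simp
  have hmem (x : sphere (0 : E) 1) : (x : E) ∈ closedBall (0 : E) 1 :=
    sphere_subset_closedBall x.2
  have hclose (x : sphere (0 : E) 1) : |f (r • (x : E)) / r ^ d - ω x| ≤ ε := by
    simpa [hrescale, hf0] using (hlip r hr).dist_le_mul x (hmem x) 0 (by simp)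
  have hlipS : LipschitzWith ε fun x : sphere (0 : E) 1 => f (r • (x : E)) / r ^ d - ω x := by
    simpa only [hrescale] using! ((hlip r hr).mono sphere_subset_closedBall).to_restrict
  have hsublevel : {x : sphere (0 : E) 1 | f (r • (x : E)) ≤ a * r ^ d} =
      {x : sphere (0 : E) 1 | f (r • (x : E)) / r ^ d ≤ a} := by
    simp only [div_le_iff₀ hrd]
  have hone : {x : sphere (0 : E) 1 | ω ((1 : ℝ) • (x : E)) < b} =
      {x : sphere (0 : E) 1 | ω x < b} := by
    simp only [one_smul]
  obtain ⟨e⟩ := hequiv _ hclose hlipS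
  exact ⟨((sphereRescaleHomeomorph hr.1 fun x => f x ≤ a * r ^ d).trans
    (.setCongr hsublevel)).toHomotopyEquiv.trans <| e.trans <|
      ((sphereRescaleHomeomorph one_pos fun x => ω x < b).trans
        (.setCongr hone)).symm.toHomotopyEquiv⟩

theorem exists_lt_forall_tangentialGradient_eval_ne_zero {ι : Type*} [Fintype ι]
    (P : MvPolynomial ι ℝ) (b : ℝ) :
    ∃ a₀ < b, ∀ x : EuclideanSpace ℝ ι, ‖x‖ = 1 → eval (fun i => x i) P ∈ Ioo a₀ b →
      tangentialGradient (fun y : EuclideanSpace ℝ ι => eval (fun i => y i) P) x ≠ 0 := by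
  obtain ⟨a₀, ha₀, hdisj⟩ :=
    exists_lt_disjoint_Ioo_of_finite (finite_setOf_isSphereCriticalValue P) b
  exact ⟨a₀, ha₀, fun x hx hxP hgrad => disjoint_left.1 hdisj hxP
    (isSphereCriticalValue_of_tangentialGradient_eq_zero P hx hgrad)⟩

end RegularValues

open scoped ContinuousMap Topology in
theorem statement1_general {ι : Type*} [Fintype ι] {d : ℕ} {f ω : EuclideanSpace ℝ ι → ℝ}
    {P : MvPolynomial ι ℝ} (hPhom : P.IsHomogeneous d)
    (hωP : ∀ x, ω x = MvPolynomial.eval (fun i => x i) P)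
    (hf : ∀ᶠ x in 𝓝 0, DifferentiableAt ℝ f x) (hf0 : f 0 = ω 0)
    (hg : fderiv ℝ (fun x => f x - ω x) =O[𝓝 0] fun x => ‖x‖ ^ d) :
    ∃ a₀ < (0 : ℝ), ∀ a ∈ Ioo a₀ (0 : ℝ), ∃ r₀ > (0 : ℝ), ∀ r ∈ Ioc (0 : ℝ) r₀,
      Nonempty ({x | ‖x‖ = r ∧ f x ≤ a * r ^ d} ≃ₕ {x | ‖x‖ = r ∧ ω x ≤ a * r ^ d}) ∧
      Nonempty ({x | ‖x‖ = r ∧ ω x ≤ a * r ^ d} ≃ₕ {x | ‖x‖ = 1 ∧ ω x < 0}) ∧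
      Nonempty ({x | ‖x‖ = r ∧ f x ≤ a * r ^ d} ≃ₕ {x | ‖x‖ = 1 ∧ ω x < 0}) := by
  obtain rfl : ω = fun x => MvPolynomial.eval (fun i => x i) P := funext hωP
  set ω := fun x : EuclideanSpace ℝ ι => MvPolynomial.eval (fun i => x i) P
  have hω : ContDiff ℝ 2 ω := (AnalyticOnNhd.eval_continuousLinearMap'
    (fun i => (EuclideanSpace.proj i : EuclideanSpace ℝ ι →L[ℝ] ℝ)) P).contDiff
  have hωd (r : ℝ) (_ : r > 0) (x : EuclideanSpace ℝ ι) : ω (r • x) = r ^ d * ω x :=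
    eval_smul_of_isHomogeneous hPhom r _
  obtain ⟨a₀, ha₀, hreg⟩ := exists_lt_forall_tangentialGradient_eval_ne_zero P 0
  refine ⟨a₀, ha₀, fun a ha => ?_⟩
  obtain ⟨r₁, hr₁, hf_equiv⟩ := exists_forall_nonempty_homotopyEquiv_of_isBigO_fderiv_sub hω hωd
    ha hreg hf hf0 hg
  obtain ⟨r₂, hr₂, hω_equiv⟩ := exists_forall_nonempty_homotopyEquiv_of_isBigO_fderiv_sub hω hωd
    ha hreg (.of_forall fun x => hω.differentiable two_ne_zero x) rfl
    (.of_bound 0 (by simp))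
  refine ⟨min r₁ r₂, lt_min hr₁ hr₂, fun r hr => ?_⟩
  obtain ⟨e₁⟩ := hf_equiv r ⟨hr.1, hr.2.trans (min_le_left _ _)⟩
  obtain ⟨e₂⟩ := hω_equiv r ⟨hr.1, hr.2.trans (min_le_right _ _)⟩
  exact ⟨⟨e₁.trans e₂.symm⟩, ⟨e₂⟩, ⟨e₁⟩⟩

/-- For `f` analytic near the origin with `f 0 = 0` and initial form `ω`,
a nonzero homogeneous polynomial of degree `d` (so that `f - ω = O(‖x‖^(d+1))` at `0`),
and `Ω = {x : ‖x‖ = 1, ω x < 0}`, there is `a₀ < 0` such that for every `a ∈ (a₀, 0)`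
there is `r₀ > 0` such that for every `r ∈ (0, r₀]` the three sets
`{‖x‖ = r, f x ≤ a r^d}`, `{‖x‖ = r, ω x ≤ a r^d}` and `Ω` are pairwise homotopy
equivalent. -/
theorem statement1 (n d : ℕ) (f ω : EuclideanSpace ℝ (Fin n) → ℝ)
    (U : Set (EuclideanSpace ℝ (Fin n))) (hU : IsOpen U)
    (h0U : (0 : EuclideanSpace ℝ (Fin n)) ∈ U)
    (hf : AnalyticOnNhd ℝ f U) (hf0 : f 0 = 0)
    (P : MvPolynomial (Fin n) ℝ) (hP0 : P ≠ 0) (hPhom : P.IsHomogeneous d)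
    (hωP : ∀ x : EuclideanSpace ℝ (Fin n), ω x = MvPolynomial.eval (fun i => x i) P)
    (hg : (fun x : EuclideanSpace ℝ (Fin n) => f x - ω x) =O[nhds 0]
      fun x : EuclideanSpace ℝ (Fin n) => ‖x‖ ^ (d + 1)) :
    ∃ a₀ < (0 : ℝ), ∀ a ∈ Ioo a₀ (0 : ℝ), ∃ r₀ > (0 : ℝ), ∀ r ∈ Ioc (0 : ℝ) r₀,
      Nonempty (ContinuousMap.HomotopyEquiv
        ↥{x : EuclideanSpace ℝ (Fin n) | ‖x‖ = r ∧ f x ≤ a * r ^ d}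
        ↥{x : EuclideanSpace ℝ (Fin n) | ‖x‖ = r ∧ ω x ≤ a * r ^ d}) ∧
      Nonempty (ContinuousMap.HomotopyEquiv
        ↥{x : EuclideanSpace ℝ (Fin n) | ‖x‖ = r ∧ ω x ≤ a * r ^ d}
        ↥{x : EuclideanSpace ℝ (Fin n) | ‖x‖ = 1 ∧ ω x < 0}) ∧
      Nonempty (ContinuousMap.HomotopyEquiv
        ↥{x : EuclideanSpace ℝ (Fin n) | ‖x‖ = r ∧ f x ≤ a * r ^ d}
        ↥{x : EuclideanSpace ℝ (Fin n) | ‖x‖ = 1 ∧ ω x < 0}) := by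
  have hω : AnalyticAt ℝ ω 0 := by
    rw [funext hωP]
    exact AnalyticOnNhd.eval_continuousLinearMap'
      (fun i => (EuclideanSpace.proj i : EuclideanSpace ℝ (Fin n) →L[ℝ] ℝ)) P 0 (mem_univ 0)
  have hf' := hf 0 h0U
  exact statement1_general hPhom hωP
    (hf'.eventually_analyticAt.mono fun x hx => hx.differentiableAt)
    (sub_eq_zero.1 (IsBigO.eq_zero_of_norm_pow (f := fun x => f x - ω x) (x₀ := 0)
      (by simpa using hg) d.succ_ne_zero))
    (by simpa using isBigO_fderiv_of_isBigO_norm_pow_succ (hf'.fun_sub hω) (by simpa using hg))
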